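/- Let c > 1, α ∈ (0,2)\{1}, let θ₁, θ₂ be smooth admissible functions with respect to c and α, let v ∈ ℝ, and let D₁, D₂ ∈ ℝ with D₁, D₂ ≤ 0 if α ∈ (0,1), D₁, D₂ ≥ 0 if α ∈ (1,2), and D₁ + D₂ ≠ 0. For j = 1,2 let φ_j be the measure on (0,∞) with φ_j((r,∞)) = r^{−α} θ_j(log r) for all r > 0, and define ψ : ℝ → ℂ by ψ(k) := ivk − |D₁| ∫₀^∞ (e^{iky} − 1) dφ₁(y) − |D₂| ∫₀^∞ (e^{−iky} − 1) dφ₂(y) if α ∈ (0,1), and ψ(k) := ivk + |D₁| ∫₀^∞ (e^{iky} − 1 − iky) dφ₁(y) + |D₂| ∫₀^∞ (e^{−iky} − 1 + iky) dφ₂(y) if α ∈ (1,2). Suppose p : ℝ × (0,∞) → ℝ is such that for every t > 0 the functions x ↦ p(x,t), x ↦ ∂ₓ p(x,t), x ↦ ∂ₓ² p(x,t) lie in C₀(ℝ) ∩ L¹(ℝ), t ↦ p(x,t) is differentiable for every x with x ↦ ∂ₜ p(x,t) continuous and in L¹(ℝ) for each t, the Fourier transform satisfies ∫_ℝ e^{ikx}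 p(x,t) dx = exp(t ψ(k)) for all k ∈ ℝ and t > 0, and ∫_ℝ e^{ikx} ∂ₜ p(x,t) dx = ψ(k) exp(t ψ(k)) for all k, t. Then for every t > 0 and x ∈ ℝ, ∂ₜ p(x,t) = −v ∂ₓ p(x,t) + D₁ · (∂^α/∂_{c,θ₁}x^α) p(x,t) + D₂ · (∂^α/∂_{c,θ₂}(−x)^α) p(x,t). -/

import Mathlib

/-!
For `1 < α` the equation is checked on the Fourier side. Both sides are continuous integrable
functions of `x`, so it suffices that `∫ e^{ikx} (·) dx` agrees for all `k`
(`eq_zero_of_fourier_eq_zero`, from Fourier inversion). Translation and differentiation turn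
the remainder `f(x ∓ y) - f(x) ± y f'(x)` into `e^{±iky} - 1 ∓ iky` times the transform of `f`
(`fourier_taylorRem`), and Fubini carries this through `∫ … dφ(y)`
(`fourier_integral_taylorRem`). The analytic input is that the remainder is at most a constant
times `min(y, y²)`, both uniformly in `x` (`abs_taylorRem_le`, which gives continuity) and in
`L¹(dx)` (`lintegral_taylorRem_le`, which gives Fubini). The function `min(y, y²)` is
`φ`-integrable by the layer cake formula, because `θ` is bounded and hence
`φ((r,∞)) ≤ M r^{-α}` with `1 < α < 2` (`integrable_min_of_tail`).

For `α < 1` the hypotheses are contradictory: with the stated sign of `ψ` one has `0 ≤ Re ψ`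
(`re_integral_exp_sub_one_nonpos`), so `exp(t ψ(k))` has modulus at least `1` for every `k`, whereas
the Fourier transform of `p(·,t)` tends to `0` by the Riemann–Lebesgue lemma
(`exists_norm_fourier_lt_one`). The assertion for `α < 1` therefore holds vacuously.
-/

open MeasureTheory Real Filter Set Complex

noncomputable section

def IsAdmissible (c α : ℝ) (θ : ℝ → ℝ) : Prop :=
  (∀ x, 0 < θ x) ∧
  Function.Periodic θ (Real.log (c ^ (1 / α))) ∧
  ∀ y δ : ℝ, 0 ≤ δ → θ (y + δ) ≤ Real.exp (α * δ) * θ y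

def IsSmoothAdmissible (c α : ℝ) (θ : ℝ → ℝ) (cfs : ℤ → ℂ) : Prop :=
  IsAdmissible c α θ ∧ Continuous θ ∧
  (∀ k : ℤ, cfs (-k) = starRingEnd ℂ (cfs k)) ∧
  (∃ C > 0, ∀ k : ℤ, k ≠ 0 → ‖cfs k‖ ≤ C / (k : ℝ) ^ 2) ∧
  Summable (fun k : ℤ => ‖cfs k‖) ∧
  ∀ x : ℝ, HasSum
    (fun k : ℤ => cfs k * Complex.exp (Complex.I * (k : ℂ) * ((2 * Real.pi * α / Real.log c : ℝ) : ℂ) * (x : ℂ)))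
    ((θ x : ℂ))

/-- `f ∈ C₀(ℝ) ∩ L¹(ℝ)`: continuous, vanishing at `±∞`, and Lebesgue integrable. -/
def MemC0L1 (f : ℝ → ℝ) : Prop :=
  Continuous f ∧ Tendsto f (cocompact ℝ) (nhds 0) ∧ Integrable f

/-! ### Bounds for the Taylor remainder -/

theorem lintegral_intervalIntegral_le {F : ℝ → ℝ → ℝ} (hF : Continuous (Function.uncurry F))
    {y : ℝ} (hy : 0 ≤ y) {K : ENNReal}
    (hK : ∀ s ∈ Set.Ioc 0 y, ∫⁻ x, ‖F x s‖ₑ ≤ K) :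
    ∫⁻ x, ‖∫ s in (0 : ℝ)..y, F x s‖ₑ ≤ ENNReal.ofReal y * K := by
  calc ∫⁻ x, ‖∫ s in (0 : ℝ)..y, F x s‖ₑ
      ≤ ∫⁻ x, ∫⁻ s in Set.Ioc 0 y, ‖F x s‖ₑ := by
        refine lintegral_mono fun x => ?_
        rw [intervalIntegral.integral_of_le hy]
        exact enorm_integral_le_lintegral_enorm _
    _ = ∫⁻ s in Set.Ioc 0 y, ∫⁻ x, ‖F x s‖ₑ :=
        lintegral_lintegral_swap hF.enorm.measurable.aemeasurable
    _ ≤ ∫⁻ s in Set.Ioc 0 y, K := setLIntegral_mono' measurableSet_Ioc hK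
    _ = ENNReal.ofReal y * K := by
        rw [setLIntegral_const, Real.volume_Ioc, sub_zero, mul_comm]

theorem shift_eq_integral {g g' : ℝ → ℝ} (hg : ∀ x, HasDerivAt g (g' x) x) (hc : Continuous g')
    (σ x s : ℝ) : g x - g (x - σ * s) = ∫ u in (0 : ℝ)..s, σ * g' (x - σ * u) := by
  rw [intervalIntegral.integral_eq_sub_of_hasDerivAt (f := fun u => - g (x - σ * u))]
  · simp only [mul_zero, sub_zero]
    ring
  · intro u _
    have h1 : HasDerivAt (fun u : ℝ => x - σ * u) (-σ) u := by
      simpa using ((hasDerivAt_id u).const_mul σ).const_sub x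
    have := ((hg (x - σ * u)).comp u h1).neg
    rw [show σ * g' (x - σ * u) = -(g' (x - σ * u) * -σ) by ring]
    exact this
  · exact (by fun_prop : Continuous fun u => σ * g' (x - σ * u)).intervalIntegrable _ _

theorem lintegral_comp_sub (g : ℝ → ℝ) (a : ℝ) : ∫⁻ x, ‖g (x - a)‖ₑ = ∫⁻ x, ‖g x‖ₑ :=
  lintegral_sub_right_eq_self (fun x => ‖g x‖ₑ) a

theorem lintegral_shift_le {g g' : ℝ → ℝ} (hg : ∀ x, HasDerivAt g (g' x) x) (hc : Continuous g')
    {σ : ℝ} (hσ : |σ| = 1) {s : ℝ} (hs : 0 ≤ s) :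
    ∫⁻ x, ‖g x - g (x - σ * s)‖ₑ ≤ ENNReal.ofReal s * ∫⁻ x, ‖g' x‖ₑ := by
  simp_rw [shift_eq_integral hg hc]
  refine lintegral_intervalIntegral_le (F := fun x u => σ * g' (x - σ * u)) ?_ hs ?_
  · fun_prop
  · intro u _
    have hσ' : ‖σ‖ₑ = 1 := by rw [← ofReal_norm, Real.norm_eq_abs, hσ, ENNReal.ofReal_one]
    simp_rw [enorm_mul, hσ', one_mul]
    exact (lintegral_comp_sub g' (σ * u)).le

/-- The first order Taylor remainder `f(x - σ y) - f(x) + σ y f'(x)`. The two signs `σ = ±1`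
give the integrands of the positive and the negative semi-fractional derivative of order
`α ∈ (1,2)`. -/
def taylorRem (σ : ℝ) (f f' : ℝ → ℝ) (x y : ℝ) : ℝ := f (x - σ * y) - f x + σ * y * f' x

theorem taylorRem_eq_integral {f f' : ℝ → ℝ} (hf : ∀ x, HasDerivAt f (f' x) x)
    (hc : Continuous f') (σ x y : ℝ) :
    taylorRem σ f f' x y = ∫ s in (0 : ℝ)..y, σ * (f' x - f' (x - σ * s)) := by
  have h := shift_eq_integral hf hc σ x y
  have h2 : ∫ s in (0 : ℝ)..y, σ * (f' x - f' (x - σ * s))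
      = (∫ s in (0 : ℝ)..y, σ * f' x) - ∫ s in (0 : ℝ)..y, σ * f' (x - σ * s) := by
    rw [← intervalIntegral.integral_sub]
    · simp only [mul_sub]
    · exact intervalIntegrable_const
    · exact (by fun_prop : Continuous fun s => σ * f' (x - σ * s)).intervalIntegrable _ _
  rw [h2, ← h, intervalIntegral.integral_const, taylorRem]
  simp only [sub_zero, smul_eq_mul]
  ring

/-- The `L¹(dx)` bound: a first difference of `f'` costs `2 ‖f'‖₁`, or `y ‖f''‖₁` when the step
is at most `y`, and integrating it over a step range of length `y` gives another factor `y`. -/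
theorem lintegral_taylorRem_le {f f' f'' : ℝ → ℝ} (hf : ∀ x, HasDerivAt f (f' x) x)
    (hf' : ∀ x, HasDerivAt f' (f'' x) x) (hc : Continuous f') (hc' : Continuous f'')
    {σ : ℝ} (hσ : |σ| = 1) {y : ℝ} (hy : 0 ≤ y) :
    ∫⁻ x, ‖taylorRem σ f f' x y‖ₑ ≤
      ENNReal.ofReal (min y (y ^ 2)) * (2 * (∫⁻ x, ‖f' x‖ₑ) + ∫⁻ x, ‖f'' x‖ₑ) := by
  have hσ' : ‖σ‖ₑ = 1 := by rw [← ofReal_norm, Real.norm_eq_abs, hσ, ENNReal.ofReal_one]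
  simp_rw [taylorRem_eq_integral hf hc]
  have hF : Continuous (Function.uncurry fun x s => σ * (f' x - f' (x - σ * s))) := by fun_prop
  have h1 : ∀ s ∈ Set.Ioc 0 y, ∫⁻ x, ‖σ * (f' x - f' (x - σ * s))‖ₑ ≤ 2 * ∫⁻ x, ‖f' x‖ₑ := by
    intro s _
    simp_rw [enorm_mul, hσ', one_mul]
    calc ∫⁻ x, ‖f' x - f' (x - σ * s)‖ₑ ≤ ∫⁻ x, (‖f' x‖ₑ + ‖f' (x - σ * s)‖ₑ) :=
          lintegral_mono fun x => enorm_sub_le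
      _ = 2 * ∫⁻ x, ‖f' x‖ₑ := by
          rw [lintegral_add_left hc.enorm.measurable, lintegral_comp_sub, two_mul]
  have h2 : ∀ s ∈ Set.Ioc 0 y, ∫⁻ x, ‖σ * (f' x - f' (x - σ * s))‖ₑ
      ≤ ENNReal.ofReal y * ∫⁻ x, ‖f'' x‖ₑ := by
    intro s hs
    simp_rw [enorm_mul, hσ', one_mul]
    refine (lintegral_shift_le hf' hc' hσ hs.1.le).trans ?_
    gcongr
    exact hs.2
  have e1 := lintegral_intervalIntegral_le hF hy h1
  have e2 := lintegral_intervalIntegral_le hF hy h2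
  rcases le_total y (y ^ 2) with h | h
  · rw [min_eq_left h]
    exact e1.trans (by gcongr; exact le_self_add)
  · rw [min_eq_right h, pow_two, ENNReal.ofReal_mul hy, mul_assoc]
    exact e2.trans (by gcongr; exact le_add_self)

/-- The uniform analogue of `lintegral_taylorRem_le`. -/
theorem abs_taylorRem_le {f f' f'' : ℝ → ℝ} (hf : ∀ x, HasDerivAt f (f' x) x)
    (hf' : ∀ x, HasDerivAt f' (f'' x) x) (hc : Continuous f') (hc' : Continuous f'')
    {a b : ℝ} (ha : ∀ x, |f' x| ≤ a) (hb : ∀ x, |f'' x| ≤ b)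
    {σ : ℝ} (hσ : |σ| = 1) {y : ℝ} (hy : 0 ≤ y) (x : ℝ) :
    ‖taylorRem σ f f' x y‖ ≤ min y (y ^ 2) * (2 * a + b) := by
  have ha0 : 0 ≤ a := (abs_nonneg _).trans (ha 0)
  have hb0 : 0 ≤ b := (abs_nonneg _).trans (hb 0)
  rw [taylorRem_eq_integral hf hc]
  have h1 : ‖∫ s in (0 : ℝ)..y, σ * (f' x - f' (x - σ * s))‖ ≤ (2 * a) * |y - 0| := by
    refine intervalIntegral.norm_integral_le_of_norm_le_const fun s _ => ?_
    rw [norm_mul, Real.norm_eq_abs σ, hσ, one_mul]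
    refine (norm_sub_le _ _).trans ?_
    have := ha x
    have := ha (x - σ * s)
    simp only [Real.norm_eq_abs]
    linarith
  have h2 : ‖∫ s in (0 : ℝ)..y, σ * (f' x - f' (x - σ * s))‖ ≤ (b * y) * |y - 0| := by
    refine intervalIntegral.norm_integral_le_of_norm_le_const fun s hs => ?_
    rw [Set.uIoc_of_le hy] at hs
    rw [norm_mul, Real.norm_eq_abs σ, hσ, one_mul, shift_eq_integral hf' hc']
    refine (intervalIntegral.norm_integral_le_of_norm_le_const (C := b) fun u _ => ?_).trans ?_
    · rw [norm_mul, Real.norm_eq_abs σ, hσ, one_mul]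
      exact hb _
    · rw [sub_zero, abs_of_pos hs.1]
      gcongr
      exact hs.2
  rw [sub_zero, abs_of_nonneg hy] at h1 h2
  rcases le_total y (y ^ 2) with h | h
  · rw [min_eq_left h]
    nlinarith [mul_nonneg hy hb0]
  · rw [min_eq_right h]
    nlinarith [mul_nonneg (sq_nonneg y) ha0]

theorem MemC0L1.exists_bound {f : ℝ → ℝ} (hf : MemC0L1 f) : ∃ C, ∀ x, |f x| ≤ C := by
  obtain ⟨C, hC⟩ := ZeroAtInftyContinuousMap.bounded (⟨⟨f, hf.1⟩, hf.2.1⟩ : ZeroAtInftyContinuousMap ℝ ℝ)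
  refine ⟨C + |f 0|, fun x => ?_⟩
  have h1 : dist (f x) (f 0) ≤ C := hC x 0
  have h2 : |f x| ≤ |f x - f 0| + |f 0| := by simpa using abs_add_le (f x - f 0) (f 0)
  rw [Real.dist_eq] at h1
  linarith

/-! ### Measures with a power-law tail -/

theorem sigmaFinite_of_tail {φ : Measure ℝ} (h0 : φ (Set.Iic 0) = 0)
    (h : ∀ r : ℝ, 0 < r → φ (Set.Ioi r) < ⊤) : SigmaFinite φ := by
  refine ⟨⟨⟨fun n => Set.Iic 0 ∪ Set.Ioi (1 / ((n : ℝ) + 1)), fun _ => trivial, fun n => ?_, ?_⟩⟩⟩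
  · refine (measure_union_le _ _).trans_lt ?_
    rw [h0, zero_add]
    exact h _ (by positivity)
  · ext x
    simp only [Set.mem_iUnion, Set.mem_univ, iff_true]
    rcases le_or_gt x 0 with hx | hx
    · exact ⟨0, Or.inl hx⟩
    · obtain ⟨n, hn⟩ := exists_nat_one_div_lt hx
      exact ⟨n, Or.inr hn⟩

/-- The Lévy-type integrability `∫ min(y, y²) dφ(y) < ∞`, from a tail bound of order
`α ∈ (1,2)`. -/
theorem integrable_min_of_tail {φ : Measure ℝ} {α M : ℝ} (hα1 : 1 < α) (hα2 : α < 2)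
    (h0 : φ (Set.Iic 0) = 0)
    (h : ∀ r : ℝ, 0 < r → φ (Set.Ioi r) ≤ ENNReal.ofReal (M * r ^ (-α))) :
    Integrable (fun y : ℝ => min y (y ^ 2)) φ := by
  have hpos : ∀ᵐ y ∂φ, 0 < y := by
    rw [ae_iff]; simpa [Set.Iic] using h0
  have hnn : 0 ≤ᵐ[φ] fun y : ℝ => min y (y ^ 2) := by
    filter_upwards [hpos] with y hy
    exact le_min hy.le (sq_nonneg y)
  have hcont : Continuous fun y : ℝ => min y (y ^ 2) := by fun_prop
  refine ⟨hcont.aestronglyMeasurable, ?_⟩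
  rw [hasFiniteIntegral_iff_ofReal hnn, lintegral_eq_lintegral_meas_lt φ hnn hcont.aemeasurable,
    ← Set.Ioc_union_Ioi_eq_Ioi (zero_le_one (α := ℝ))]
  refine (lintegral_union_le _ _ _).trans_lt (ENNReal.add_lt_top.2 ⟨?_, ?_⟩)
  · have hi : IntegrableOn (fun t : ℝ => M * t ^ (-α / 2)) (Set.Ioc 0 1) := by
      have := (intervalIntegral.intervalIntegrable_rpow' (a := 0) (b := 1) (r := -α / 2)
        (by linarith)).const_mul M
      rwa [intervalIntegrable_iff_integrableOn_Ioc_of_le zero_le_one] at this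
    refine (setLIntegral_mono' measurableSet_Ioc fun t ht => ?_).trans_lt hi.lintegral_lt_top
    -- Near `t = 0` the relevant branch is `y²`, which gives the integrable power `t^{-α/2}`.
    have hs : {y : ℝ | t < min y (y ^ 2)} ⊆ Set.Ioi (t ^ (1 / 2 : ℝ)) := by
      intro y hy
      have hy' : t < y ∧ t < y ^ 2 := lt_min_iff.1 hy
      rw [Set.mem_Ioi, ← Real.sqrt_eq_rpow]
      exact (Real.sqrt_lt' (ht.1.trans hy'.1)).2 hy'.2
    refine (measure_mono hs).trans ((h _ (Real.rpow_pos_of_pos ht.1 _)).trans_eq ?_)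
    rw [← Real.rpow_mul ht.1.le]
    ring_nf
  · have hi : IntegrableOn (fun t : ℝ => M * t ^ (-α)) (Set.Ioi 1) :=
      (integrableOn_Ioi_rpow_of_lt (by linarith) one_pos).const_mul M
    refine (setLIntegral_mono' measurableSet_Ioi fun t ht => ?_).trans_lt hi.lintegral_lt_top
    have ht' : (1 : ℝ) < t := ht
    have hs : {y : ℝ | t < min y (y ^ 2)} ⊆ Set.Ioi t := by
      intro y hy
      have hy' : t < y ∧ t < y ^ 2 := lt_min_iff.1 hy
      exact hy'.1
    exact (measure_mono hs).trans (h t (by linarith))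

/-! ### Fourier transforms of translates, derivatives and remainders -/

theorem norm_fourierKernel (k x : ℝ) : ‖Complex.exp (Complex.I * (k : ℂ) * (x : ℂ))‖ = 1 := by
  rw [mul_assoc, mul_comm, ← Complex.ofReal_mul, Complex.norm_exp_ofReal_mul_I]

theorem integrable_fourierKernel_mul {f : ℝ → ℝ} (hf : Integrable f) (k : ℝ) :
    Integrable fun x : ℝ => Complex.exp (Complex.I * (k : ℂ) * (x : ℂ)) * ((f x : ℝ) : ℂ) :=
  hf.ofReal.bdd_mul (c := 1) (by fun_prop : Continuous _).aestronglyMeasurable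
    (Eventually.of_forall fun x => (norm_fourierKernel k x).le)

theorem fourier_shift (f : ℝ → ℝ) (k a : ℝ) :
    ∫ x : ℝ, Complex.exp (Complex.I * (k : ℂ) * (x : ℂ)) * ((f (x - a) : ℝ) : ℂ)
      = Complex.exp (Complex.I * (k : ℂ) * (a : ℂ)) *
        ∫ x : ℝ, Complex.exp (Complex.I * (k : ℂ) * (x : ℂ)) * ((f x : ℝ) : ℂ) := by
  rw [← integral_const_mul, ← integral_sub_right_eq_self
    (fun x : ℝ => Complex.exp (Complex.I * (k : ℂ) * (a : ℂ)) *
      (Complex.exp (Complex.I * (k : ℂ) * (x : ℂ)) * ((f x : ℝ) : ℂ))) a]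
  refine integral_congr_ae (Eventually.of_forall fun x => ?_)
  simp only
  rw [← mul_assoc, ← Complex.exp_add]
  congr 2
  push_cast
  ring

theorem fourier_deriv {f f' : ℝ → ℝ} (hf : ∀ x, HasDerivAt f (f' x) x) (hi : Integrable f)
    (hi' : Integrable f') (k : ℝ) :
    ∫ x : ℝ, Complex.exp (Complex.I * (k : ℂ) * (x : ℂ)) * ((f' x : ℝ) : ℂ)
      = -(Complex.I * k) *
        ∫ x : ℝ, Complex.exp (Complex.I * (k : ℂ) * (x : ℂ)) * ((f x : ℝ) : ℂ) := by
  have hu : ∀ x : ℝ, HasDerivAt (fun x : ℝ => Complex.exp (Complex.I * (k : ℂ) * (x : ℂ)))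
      (Complex.exp (Complex.I * (k : ℂ) * (x : ℂ)) * (Complex.I * k)) x := by
    intro x
    have := ((hasDerivAt_id x).ofReal_comp.const_mul (Complex.I * (k : ℂ))).cexp
    simpa using this
  rw [integral_mul_deriv_eq_deriv_mul_of_integrable (fun x _ => hu x)
    (fun x _ => (hf x).ofReal_comp) (integrable_fourierKernel_mul hi' k) ?_
    (integrable_fourierKernel_mul hi k), ← integral_const_mul, ← integral_neg]
  · refine integral_congr_ae (Eventually.of_forall fun x => ?_)
    simp only
    ring
  · refine ((integrable_fourierKernel_mul hi k).const_mul (Complex.I * k)).congr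
      (Eventually.of_forall fun x => ?_)
    simp only [Pi.mul_apply]
    ring

theorem fourier_taylorRem {f f' : ℝ → ℝ} (hf : ∀ x, HasDerivAt f (f' x) x) (hi : Integrable f)
    (hi' : Integrable f') (σ k y : ℝ) :
    ∫ x : ℝ, Complex.exp (Complex.I * (k : ℂ) * (x : ℂ)) * ((taylorRem σ f f' x y : ℝ) : ℂ)
      = (Complex.exp (Complex.I * (k : ℂ) * ((σ * y : ℝ) : ℂ)) - 1
          - Complex.I * (k : ℂ) * ((σ * y : ℝ) : ℂ)) *
        ∫ x : ℝ, Complex.exp (Complex.I * (k : ℂ) * (x : ℂ)) * ((f x : ℝ) : ℂ) := by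
  have h1 := integrable_fourierKernel_mul (hi.comp_sub_right (σ * y)) k
  have h2 := integrable_fourierKernel_mul hi k
  have h3 := (integrable_fourierKernel_mul hi' k).const_mul ((σ * y : ℝ) : ℂ)
  have h12 : Integrable fun x : ℝ =>
      Complex.exp (Complex.I * (k : ℂ) * (x : ℂ)) * ((f (x - σ * y) : ℝ) : ℂ)
        - Complex.exp (Complex.I * (k : ℂ) * (x : ℂ)) * ((f x : ℝ) : ℂ) := h1.sub h2
  calc _ = ∫ x : ℝ, (Complex.exp (Complex.I * (k : ℂ) * (x : ℂ)) * ((f (x - σ * y) : ℝ) : ℂ)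
            - Complex.exp (Complex.I * (k : ℂ) * (x : ℂ)) * ((f x : ℝ) : ℂ)
            + ((σ * y : ℝ) : ℂ) *
              (Complex.exp (Complex.I * (k : ℂ) * (x : ℂ)) * ((f' x : ℝ) : ℂ))) := by
        refine integral_congr_ae (Eventually.of_forall fun x => ?_)
        simp only [taylorRem]
        push_cast
        ring
    _ = _ := by
        rw [integral_add h12 h3, integral_sub h1 h2, integral_const_mul,
          fourier_shift f k (σ * y), fourier_deriv hf hi hi' k]
        ring

/-! ### The semi-fractional derivative as a Fourier multiplier -/

theorem continuous_taylorRem {f f' : ℝ → ℝ} (hf : Continuous f) (hf' : Continuous f') (σ : ℝ) :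
    Continuous (Function.uncurry (taylorRem σ f f')) := by
  have : Function.uncurry (taylorRem σ f f')
      = fun q : ℝ × ℝ => f (q.1 - σ * q.2) - f q.1 + σ * q.2 * f' q.1 := rfl
  rw [this]
  fun_prop

/-- Absolute convergence of the double integral over `dx dφ(y)`, which is what Fubini needs. -/
theorem integrable_taylorRem_prod {φ : Measure ℝ} [SigmaFinite φ] (hpos : ∀ᵐ y ∂φ, 0 < y)
    (hφ : Integrable (fun y : ℝ => min y (y ^ 2)) φ)
    {f f' f'' : ℝ → ℝ} (h : MemC0L1 f) (h' : MemC0L1 f') (h'' : MemC0L1 f'')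
    (hf : ∀ x, HasDerivAt f (f' x) x) (hf' : ∀ x, HasDerivAt f' (f'' x) x)
    {σ : ℝ} (hσ : |σ| = 1) :
    Integrable (Function.uncurry (taylorRem σ f f')) (volume.prod φ) := by
  have hc := continuous_taylorRem h.1 h'.1 σ
  refine ⟨hc.aestronglyMeasurable, ?_⟩
  rw [hasFiniteIntegral_iff_enorm, lintegral_prod_symm _ hc.enorm.measurable.aemeasurable]
  calc ∫⁻ y, ∫⁻ x, ‖Function.uncurry (taylorRem σ f f') (x, y)‖ₑ ∂volume ∂φ
      ≤ ∫⁻ y, ENNReal.ofReal (min y (y ^ 2)) *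
          (2 * (∫⁻ x, ‖f' x‖ₑ) + ∫⁻ x, ‖f'' x‖ₑ) ∂φ := by
        refine lintegral_mono_ae ?_
        filter_upwards [hpos] with y hy
        exact lintegral_taylorRem_le hf hf' h'.1 h''.1 hσ hy.le
    _ = (∫⁻ y, ENNReal.ofReal (min y (y ^ 2)) ∂φ) *
          (2 * (∫⁻ x, ‖f' x‖ₑ) + ∫⁻ x, ‖f'' x‖ₑ) := by
        rw [lintegral_mul_const]
        fun_prop
    _ < ⊤ := by
        refine ENNReal.mul_lt_top hφ.lintegral_lt_top (ENNReal.add_lt_top.2 ⟨?_, h''.2.2.2⟩)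
        exact ENNReal.mul_lt_top (by simp) h'.2.2.2

theorem continuous_integral_taylorRem {φ : Measure ℝ} (hpos : ∀ᵐ y ∂φ, 0 < y)
    (hφ : Integrable (fun y : ℝ => min y (y ^ 2)) φ)
    {f f' f'' : ℝ → ℝ} (h : MemC0L1 f) (h' : MemC0L1 f') (h'' : MemC0L1 f'')
    (hf : ∀ x, HasDerivAt f (f' x) x) (hf' : ∀ x, HasDerivAt f' (f'' x) x)
    {σ : ℝ} (hσ : |σ| = 1) :
    Continuous fun x => ∫ y, taylorRem σ f f' x y ∂φ := by
  obtain ⟨a, ha⟩ := h'.exists_bound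
  obtain ⟨b, hb⟩ := h''.exists_bound
  have hc := continuous_taylorRem h.1 h'.1 σ
  refine continuous_of_dominated (bound := fun y => min y (y ^ 2) * (2 * a + b)) ?_ ?_
    (hφ.mul_const _) ?_
  · intro x
    exact (hc.comp (by fun_prop : Continuous fun y : ℝ => (x, y))).aestronglyMeasurable
  · intro x
    filter_upwards [hpos] with y hy
    exact abs_taylorRem_le hf hf' h'.1 h''.1 ha hb hσ hy.le x
  · exact Eventually.of_forall fun y => hc.comp (by fun_prop : Continuous fun x : ℝ => (x, y))

/-- The semi-fractional derivative of order `α ∈ (1,2)` is a Fourier multiplier. -/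
theorem fourier_integral_taylorRem {φ : Measure ℝ} [SigmaFinite φ] (hpos : ∀ᵐ y ∂φ, 0 < y)
    (hφ : Integrable (fun y : ℝ => min y (y ^ 2)) φ)
    {f f' f'' : ℝ → ℝ} (h : MemC0L1 f) (h' : MemC0L1 f') (h'' : MemC0L1 f'')
    (hf : ∀ x, HasDerivAt f (f' x) x) (hf' : ∀ x, HasDerivAt f' (f'' x) x)
    {σ : ℝ} (hσ : |σ| = 1) (k : ℝ) :
    ∫ x : ℝ, Complex.exp (Complex.I * (k : ℂ) * (x : ℂ)) *
        ((∫ y, taylorRem σ f f' x y ∂φ : ℝ) : ℂ)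
      = (∫ y, (Complex.exp (Complex.I * (k : ℂ) * ((σ * y : ℝ) : ℂ)) - 1
          - Complex.I * (k : ℂ) * ((σ * y : ℝ) : ℂ)) ∂φ) *
        ∫ x : ℝ, Complex.exp (Complex.I * (k : ℂ) * (x : ℂ)) * ((f x : ℝ) : ℂ) := by
  have hI := integrable_taylorRem_prod hpos hφ h h' h'' hf hf' hσ
  have hJ : Integrable (Function.uncurry fun x y : ℝ =>
      Complex.exp (Complex.I * (k : ℂ) * (x : ℂ)) * ((taylorRem σ f f' x y : ℝ) : ℂ))
      (volume.prod φ) := by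
    refine hI.ofReal.bdd_mul (c := 1)
      (f := fun q : ℝ × ℝ => Complex.exp (Complex.I * (k : ℂ) * (q.1 : ℂ)))
      (by fun_prop : Continuous _).aestronglyMeasurable
      (Eventually.of_forall fun q => (norm_fourierKernel k q.1).le)
  calc _ = ∫ x : ℝ, ∫ y, Complex.exp (Complex.I * (k : ℂ) * (x : ℂ)) *
            ((taylorRem σ f f' x y : ℝ) : ℂ) ∂φ := by
        refine integral_congr_ae (Eventually.of_forall fun x => ?_)
        simp only
        rw [integral_const_mul, integral_complex_ofReal]
    _ = _ := by
        rw [integral_integral_swap hJ, ← integral_mul_const]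
        refine integral_congr_ae (Eventually.of_forall fun y => ?_)
        exact fourier_taylorRem hf h.2.2 h'.2.2 σ k y

/-! ### Injectivity and decay of the Fourier transform -/

/-- Mathlib's kernel `e^{-2πiwx}` is the kernel `e^{ikx}` at `k = -2πw`. -/
theorem fourier_eq_kernel (g : ℝ → ℝ) (w : ℝ) :
    FourierTransform.fourier (fun x => ((g x : ℝ) : ℂ)) w
      = ∫ x : ℝ, Complex.exp (Complex.I * ((-2 * Real.pi * w : ℝ) : ℂ) * (x : ℂ)) *
          ((g x : ℝ) : ℂ) := by
  rw [Real.fourier_real_eq_integral_exp_smul]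
  refine integral_congr_ae (Eventually.of_forall fun x => ?_)
  simp only [smul_eq_mul]
  congr 2
  push_cast
  ring

theorem eq_zero_of_fourier_eq_zero {g : ℝ → ℝ} (hc : Continuous g) (hi : Integrable g)
    (h : ∀ k : ℝ, ∫ x : ℝ, Complex.exp (Complex.I * (k : ℂ) * (x : ℂ)) * ((g x : ℝ) : ℂ) = 0)
    (x : ℝ) : g x = 0 := by
  have h0 : FourierTransform.fourier (fun x => ((g x : ℝ) : ℂ)) = 0 := by
    funext w
    rw [fourier_eq_kernel, h]
    rfl
  have h1 := Continuous.fourierInv_fourier_eq (f := fun x => ((g x : ℝ) : ℂ))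
    (by fun_prop) hi.ofReal (by rw [h0]; exact integrable_zero _ _ _)
  have h2 := congrFun h1 x
  rw [h0] at h2
  simp only [Real.fourierInv_eq, Pi.zero_apply, smul_zero, integral_zero] at h2
  exact_mod_cast h2.symm

/-- Riemann–Lebesgue: a Fourier transform cannot stay outside the open unit disc. -/
theorem exists_norm_fourier_lt_one (g : ℝ → ℝ) :
    ∃ k : ℝ, ‖∫ x : ℝ, Complex.exp (Complex.I * (k : ℂ) * (x : ℂ)) * ((g x : ℝ) : ℂ)‖ < 1 := by
  have h := (Real.tendsto_integral_exp_smul_cocompact (fun x => ((g x : ℝ) : ℂ))).norm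
  rw [norm_zero] at h
  obtain ⟨w, hw⟩ := (h.eventually_lt_const one_pos).exists
  refine ⟨-2 * Real.pi * w, ?_⟩
  rw [← fourier_eq_kernel, Real.fourier_real_eq]
  exact hw

/-! ### The symbol and the tail of the measures -/

/-- No integrability is needed: if the integrand is not integrable, the Bochner integral is `0`. -/
theorem re_integral_exp_sub_one_nonpos (φ : Measure ℝ) (k : ℝ) :
    (∫ y, (Complex.exp (Complex.I * (k : ℂ) * (y : ℂ)) - 1) ∂φ).re ≤ 0 := by
  by_cases hi : Integrable (fun y : ℝ => Complex.exp (Complex.I * (k : ℂ) * (y : ℂ)) - 1) φ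
  · have := integral_re hi
    simp only [RCLike.re_to_complex] at this
    rw [← this]
    refine integral_nonpos fun y => ?_
    have h1 := Complex.re_le_norm (Complex.exp (Complex.I * (k : ℂ) * (y : ℂ)))
    rw [norm_fourierKernel] at h1
    simpa using h1
  · rw [integral_undef hi]
    simp

/-- A periodic continuous `θ` is bounded, so the tail of `φ` is at most a power. -/
theorem tail_bound {c α : ℝ} (hc : 1 < c) (hα : 0 < α) {θ : ℝ → ℝ} {cfs : ℤ → ℂ}
    (hθ : IsSmoothAdmissible c α θ cfs) {φ : Measure ℝ}
    (hφ : ∀ r : ℝ, 0 < r → φ (Set.Ioi r) = ENNReal.ofReal (r ^ (-α) * θ (Real.log r))) :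
    ∃ M : ℝ, ∀ r : ℝ, 0 < r → φ (Set.Ioi r) ≤ ENNReal.ofReal (M * r ^ (-α)) := by
  have hper : Real.log (c ^ (1 / α)) ≠ 0 := by
    rw [Real.log_rpow (by linarith)]
    have := Real.log_pos hc
    positivity
  obtain ⟨M, hM⟩ := (hθ.1.2.1.isBounded_of_continuous hper hθ.2.1).exists_norm_le
  refine ⟨M, fun r hr => ?_⟩
  rw [hφ r hr, mul_comm]
  have := (le_abs_self _).trans (hM _ ⟨Real.log r, rfl⟩)
  gcongr

/-! ### The evolution equation -/

theorem stmt19 (c α : ℝ) (hc : 1 < c) (hα : α ∈ Set.Ioo (0 : ℝ) 2) (hα1 : α ≠ 1)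
    (θ₁ θ₂ : ℝ → ℝ) (cfs₁ cfs₂ : ℤ → ℂ)
    (hθ₁ : IsSmoothAdmissible c α θ₁ cfs₁) (hθ₂ : IsSmoothAdmissible c α θ₂ cfs₂)
    (v D₁ D₂ : ℝ)
    (hD01 : α < 1 → D₁ ≤ 0 ∧ D₂ ≤ 0) (hD12 : 1 < α → 0 ≤ D₁ ∧ 0 ≤ D₂)
    (hDsum : D₁ + D₂ ≠ 0)
    (φ₁ φ₂ : Measure ℝ)
    (hφ₁ : ∀ r : ℝ, 0 < r → φ₁ (Set.Ioi r) = ENNReal.ofReal (r ^ (-α) * θ₁ (Real.log r)))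
    (hφ₁0 : φ₁ (Set.Iic 0) = 0)
    (hφ₂ : ∀ r : ℝ, 0 < r → φ₂ (Set.Ioi r) = ENNReal.ofReal (r ^ (-α) * θ₂ (Real.log r)))
    (hφ₂0 : φ₂ (Set.Iic 0) = 0)
    (ψ : ℝ → ℂ)
    (hψ1 : α < 1 → ∀ k : ℝ, ψ k =
      Complex.I * (v : ℂ) * (k : ℂ)
        - ((|D₁| : ℝ) : ℂ) * ∫ y, (Complex.exp (Complex.I * (k : ℂ) * (y : ℂ)) - 1) ∂φ₁
        - ((|D₂| : ℝ) : ℂ) * ∫ y, (Complex.exp (-(Complex.I * (k : ℂ) * (y : ℂ))) - 1) ∂φ₂)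
    (hψ2 : 1 < α → ∀ k : ℝ, ψ k =
      Complex.I * (v : ℂ) * (k : ℂ)
        + ((|D₁| : ℝ) : ℂ) * ∫ y, (Complex.exp (Complex.I * (k : ℂ) * (y : ℂ)) - 1
            - Complex.I * (k : ℂ) * (y : ℂ)) ∂φ₁
        + ((|D₂| : ℝ) : ℂ) * ∫ y, (Complex.exp (-(Complex.I * (k : ℂ) * (y : ℂ))) - 1
            + Complex.I * (k : ℂ) * (y : ℂ)) ∂φ₂)
    (p px pxx pt : ℝ → ℝ → ℝ)
    (hp0 : ∀ t > (0 : ℝ), MemC0L1 (fun x => p x t))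
    (hpx0 : ∀ t > (0 : ℝ), MemC0L1 (fun x => px x t))
    (hpxx0 : ∀ t > (0 : ℝ), MemC0L1 (fun x => pxx x t))
    (hpx : ∀ t > (0 : ℝ), ∀ x : ℝ, HasDerivAt (fun x => p x t) (px x t) x)
    (hpxx : ∀ t > (0 : ℝ), ∀ x : ℝ, HasDerivAt (fun x => px x t) (pxx x t) x)
    (hpt : ∀ x : ℝ, ∀ t > (0 : ℝ), HasDerivAt (fun t => p x t) (pt x t) t)
    (hptc : ∀ t > (0 : ℝ), Continuous (fun x => pt x t) ∧ Integrable (fun x => pt x t))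
    (hFT : ∀ k : ℝ, ∀ t > (0 : ℝ),
      ∫ x : ℝ, Complex.exp (Complex.I * (k : ℂ) * (x : ℂ)) * ((p x t : ℝ) : ℂ)
        = Complex.exp ((t : ℂ) * ψ k))
    (hFTt : ∀ k : ℝ, ∀ t > (0 : ℝ),
      ∫ x : ℝ, Complex.exp (Complex.I * (k : ℂ) * (x : ℂ)) * ((pt x t : ℝ) : ℂ)
        = ψ k * Complex.exp ((t : ℂ) * ψ k)) :
    ∀ t > (0 : ℝ), ∀ x : ℝ,
      (α < 1 → pt x t = -v * px x t
        + D₁ * ∫ y, (p x t - p (x - y) t) ∂φ₁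
        + D₂ * ∫ y, (p x t - p (x + y) t) ∂φ₂) ∧
      (1 < α → pt x t = -v * px x t
        + D₁ * ∫ y, (p (x - y) t - p x t + y * px x t) ∂φ₁
        + D₂ * ∫ y, (p (x + y) t - p x t - y * px x t) ∂φ₂) := by
  intro t ht x
  refine ⟨fun hα' => ?_, fun hα' => ?_⟩
  · -- Here `0 ≤ Re ψ`, which is incompatible with the Riemann–Lebesgue lemma.
    exfalso
    obtain ⟨k, hk⟩ := exists_norm_fourier_lt_one (fun x => p x t)
    rw [hFT k t ht, Complex.norm_exp] at hk
    have h1 := re_integral_exp_sub_one_nonpos φ₁ k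
    have h2 := re_integral_exp_sub_one_nonpos φ₂ (-k)
    have e2 : ∀ y : ℝ, Complex.exp (Complex.I * ((-k : ℝ) : ℂ) * (y : ℂ))
        = Complex.exp (-(Complex.I * (k : ℂ) * (y : ℂ))) := by
      intro y
      congr 1
      push_cast
      ring
    simp only [e2] at h2
    have hre : 0 ≤ (ψ k).re := by
      rw [hψ1 hα' k, Complex.sub_re, Complex.sub_re, Complex.re_ofReal_mul, Complex.re_ofReal_mul]
      have h0 : (Complex.I * (v : ℂ) * (k : ℂ)).re = 0 := by simp
      rw [h0]
      nlinarith [mul_nonneg (abs_nonneg D₁) (neg_nonneg.2 h1),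
        mul_nonneg (abs_nonneg D₂) (neg_nonneg.2 h2)]
    rw [Complex.re_ofReal_mul, Real.exp_lt_one_iff] at hk
    nlinarith [mul_nonneg ht.le hre]
  · obtain ⟨hD1, hD2⟩ := hD12 hα'
    obtain ⟨M₁, hM₁⟩ := tail_bound hc hα.1 hθ₁ hφ₁
    obtain ⟨M₂, hM₂⟩ := tail_bound hc hα.1 hθ₂ hφ₂
    have hmin₁ := integrable_min_of_tail hα' hα.2 hφ₁0 hM₁
    have hmin₂ := integrable_min_of_tail hα' hα.2 hφ₂0 hM₂
    have hpos₁ : ∀ᵐ y ∂φ₁, 0 < y := by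
      rw [ae_iff]; simpa [Set.Iic] using hφ₁0
    have hpos₂ : ∀ᵐ y ∂φ₂, 0 < y := by
      rw [ae_iff]; simpa [Set.Iic] using hφ₂0
    have : SigmaFinite φ₁ :=
      sigmaFinite_of_tail hφ₁0 fun r hr => (hM₁ r hr).trans_lt ENNReal.ofReal_lt_top
    have : SigmaFinite φ₂ :=
      sigmaFinite_of_tail hφ₂0 fun r hr => (hM₂ r hr).trans_lt ENNReal.ofReal_lt_top
    have hp := hp0 t ht
    have hp' := hpx0 t ht
    have hp'' := hpxx0 t ht
    have hd := hpx t ht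
    have hd' := hpxx t ht
    have s1 : |(1 : ℝ)| = 1 := abs_one
    have s2 : |(-1 : ℝ)| = 1 := by simp
    set G₁ : ℝ → ℝ := fun x => ∫ y, taylorRem 1 (fun x => p x t) (fun x => px x t) x y ∂φ₁
      with hG₁
    set G₂ : ℝ → ℝ := fun x => ∫ y, taylorRem (-1) (fun x => p x t) (fun x => px x t) x y ∂φ₂
      with hG₂
    have c1 : Continuous G₁ := continuous_integral_taylorRem hpos₁ hmin₁ hp hp' hp'' hd hd' s1
    have c2 : Continuous G₂ := continuous_integral_taylorRem hpos₂ hmin₂ hp hp' hp'' hd hd' s2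
    have i1 : Integrable G₁ :=
      (integrable_taylorRem_prod hpos₁ hmin₁ hp hp' hp'' hd hd' s1).integral_prod_left
    have i2 : Integrable G₂ :=
      (integrable_taylorRem_prod hpos₂ hmin₂ hp hp' hp'' hd hd' s2).integral_prod_left
    have f1 := fourier_integral_taylorRem hpos₁ hmin₁ hp hp' hp'' hd hd' s1
    have f2 := fourier_integral_taylorRem hpos₂ hmin₂ hp hp' hp'' hd hd' s2
    have fd := fourier_deriv hd hp.2.2 hp'.2.2
    obtain ⟨cpt, ipt⟩ := hptc t ht
    have key := eq_zero_of_fourier_eq_zero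
      (g := fun x => pt x t + v * px x t - D₁ * G₁ x - D₂ * G₂ x) ?_ ?_ ?_ x
    · have e1 : G₁ x = ∫ y, (p (x - y) t - p x t + y * px x t) ∂φ₁ := by
        simp only [hG₁, taylorRem, one_mul]
      have e2 : G₂ x = ∫ y, (p (x + y) t - p x t - y * px x t) ∂φ₂ := by
        simp only [hG₂, taylorRem, neg_mul, one_mul, sub_neg_eq_add, ← sub_eq_add_neg]
      rw [← e1, ← e2]
      linarith
    · exact ((cpt.add (hp'.1.const_mul v)).sub (c1.const_mul D₁)).sub (c2.const_mul D₂)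
    · exact ((ipt.add (hp'.2.2.const_mul v)).sub (i1.const_mul D₁)).sub (i2.const_mul D₂)
    · intro k
      have j0 := integrable_fourierKernel_mul ipt k
      have j1 := (integrable_fourierKernel_mul hp'.2.2 k).const_mul (v : ℂ)
      have j2 := (integrable_fourierKernel_mul i1 k).const_mul (D₁ : ℂ)
      have j3 := (integrable_fourierKernel_mul i2 k).const_mul (D₂ : ℂ)
      have j01 : Integrable fun x : ℝ =>
          Complex.exp (Complex.I * (k : ℂ) * (x : ℂ)) * ((pt x t : ℝ) : ℂ)
            + (v : ℂ) * (Complex.exp (Complex.I * (k : ℂ) * (x : ℂ)) * ((px x t : ℝ) : ℂ)) :=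
        j0.add j1
      have j012 : Integrable fun x : ℝ =>
          Complex.exp (Complex.I * (k : ℂ) * (x : ℂ)) * ((pt x t : ℝ) : ℂ)
            + (v : ℂ) * (Complex.exp (Complex.I * (k : ℂ) * (x : ℂ)) * ((px x t : ℝ) : ℂ))
            - (D₁ : ℂ) * (Complex.exp (Complex.I * (k : ℂ) * (x : ℂ)) * ((G₁ x : ℝ) : ℂ)) :=
        j01.sub j2
      calc _ = ∫ x : ℝ, (Complex.exp (Complex.I * (k : ℂ) * (x : ℂ)) * ((pt x t : ℝ) : ℂ)
              + (v : ℂ) * (Complex.exp (Complex.I * (k : ℂ) * (x : ℂ)) * ((px x t : ℝ) : ℂ))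
              - (D₁ : ℂ) * (Complex.exp (Complex.I * (k : ℂ) * (x : ℂ)) * ((G₁ x : ℝ) : ℂ))
              - (D₂ : ℂ) * (Complex.exp (Complex.I * (k : ℂ) * (x : ℂ)) *
                  ((G₂ x : ℝ) : ℂ))) := by
            refine integral_congr_ae (Eventually.of_forall fun x => ?_)
            simp only
            push_cast
            ring
        _ = 0 := by
            rw [integral_sub j012 j3, integral_sub j01 j2,
              integral_add j0 j1, integral_const_mul, integral_const_mul, integral_const_mul,
              hFTt k t ht, fd k, f1 k, f2 k, hFT k t ht, hψ2 hα' k, abs_of_nonneg hD1,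
              abs_of_nonneg hD2]
            simp only [one_mul, neg_mul, Complex.ofReal_neg, mul_neg, sub_neg_eq_add]
            ring
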